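/- Let d ≥ 1, β > 0 and r ∈ ℝ^d. Let Ĉ₀ : ℝ^d → ℝ be nonnegative, even and integrable, and define 𝒞₀(x) = (2π)^{−d} ∫_{ℝ^d} Ĉ₀(u) cos(u·x) du for x ∈ ℝ^d. Define W : [0,∞) × ℝ^d → ℝ by W(ζ, u) = exp( β ∫₀^ζ [𝒞₀(u/2 + rζ') + 𝒞₀(u/2 − rζ') − 2𝒞₀(0)] dζ' ). Then for every ζ ≥ 0 and every u ∈ ℝ^d, ∂_ζ W(ζ, u) = (2β/(2π)^d) ( ∫_{ℝ^d} Ĉ₀(v) [ e^{i v·u/2} cos(r·v ζ) − 1 ] dv ) · W(ζ, u), and W(0, u) = 1. -/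

import Mathlib

open MeasureTheory Real
open scoped RealInnerProductSpace

/-- The integrated autocorrelation function `𝒞₀(x) = (2π)^{−d} ∫ Chat₀(u) cos(u·x) du`. -/
noncomputable def corr {d : ℕ} (Chat : EuclideanSpace ℝ (Fin d) → ℝ)
    (x : EuclideanSpace ℝ (Fin d)) : ℝ :=
  (2 * π) ^ (-(d : ℝ)) * ∫ u : EuclideanSpace ℝ (Fin d), Chat u * Real.cos ⟪u, x⟫

/-- `W(ζ,u) = exp(β ∫₀^ζ [𝒞₀(u/2 + rζ') + 𝒞₀(u/2 − rζ') − 2𝒞₀(0)] dζ')`, formula (4.10). -/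
noncomputable def Wfun {d : ℕ} (β : ℝ) (r : EuclideanSpace ℝ (Fin d))
    (Chat : EuclideanSpace ℝ (Fin d) → ℝ) (ζ : ℝ) (u : EuclideanSpace ℝ (Fin d)) : ℝ :=
  Real.exp (β * ∫ ζ' in (0 : ℝ)..ζ,
    (corr Chat ((2 : ℝ)⁻¹ • u + ζ' • r) + corr Chat ((2 : ℝ)⁻¹ • u - ζ' • r)
      - 2 * corr Chat (0 : EuclideanSpace ℝ (Fin d))))

/-!
The cosine transform of an integrable function is continuous, so the fundamental theorem of
calculus gives `∂_ζ W = β [𝒞₀(u/2 + rζ) + 𝒞₀(u/2 − rζ) − 2𝒞₀(0)] W`. The product formula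
`cos(a + b) + cos(a − b) = 2 cos a cos b` turns the bracket into
`2(2π)^{−d} ∫ Chat(v) [cos(v·u/2) cos(r·vζ) − 1] dv`, and since `Chat` is even, `cos(v·u/2)` may be
replaced by `e^{iv·u/2}`: the sine part integrates to zero.
-/

lemma integral_eq_zero_of_odd {G F : Type*} [MeasurableSpace G] [AddGroup G] [MeasurableNeg G]
    [NormedAddCommGroup F] [NormedSpace ℝ F] {μ : Measure G} [μ.IsNegInvariant] {f : G → F}
    (hf : f.Odd) : ∫ v, f v ∂μ = 0 := by
  have : IsAddTorsionFree F := .of_isTorsionFree ℝ F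
  simp_rw [← self_eq_neg, ← integral_neg, ← hf.eq, integral_neg_eq_self f]

section CosTransform

variable {E : Type*} [NormedAddCommGroup E] [InnerProductSpace ℝ E] [MeasurableSpace E]

/-- The cosine transform `x ↦ ∫ f(v) cos(v·x) dμ(v)` of `f` with respect to `μ`, without
normalising constant; `corr` is its multiple by `(2π)^{−d}` when `μ` is Lebesgue measure. -/
noncomputable def cosTransform (μ : Measure E) (f : E → ℝ) (x : E) : ℝ :=
  ∫ v, f v * cos ⟪v, x⟫ ∂μ

variable {μ : Measure E} {f : E → ℝ}

lemma cosTransform_zero : cosTransform μ f 0 = ∫ v, f v ∂μ := by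
  simp [cosTransform]

variable [BorelSpace E]

lemma integrable_mul_cos_inner (hf : Integrable f μ) (x : E) :
    Integrable (fun v ↦ f v * cos ⟪v, x⟫) μ :=
  hf.mul_bdd (c := 1) (Continuous.aestronglyMeasurable (by fun_prop))
    (.of_forall fun _ ↦ abs_cos_le_one _)

lemma integrable_mul_sin_inner (hf : Integrable f μ) (x : E) :
    Integrable (fun v ↦ f v * sin ⟪v, x⟫) μ :=
  hf.mul_bdd (c := 1) (Continuous.aestronglyMeasurable (by fun_prop))
    (.of_forall fun _ ↦ abs_sin_le_one _)

lemma continuous_cosTransform (hf : Integrable f μ) : Continuous (cosTransform μ f) := by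
  refine continuous_of_dominated (bound := fun v ↦ |f v|)
    (fun x ↦ (integrable_mul_cos_inner hf x).aestronglyMeasurable) (fun x ↦ .of_forall fun v ↦ ?_)
    hf.abs (.of_forall fun v ↦ by fun_prop)
  rw [norm_mul]
  exact mul_le_of_le_one_right (abs_nonneg _) (abs_cos_le_one _)

lemma cosTransform_add_add_cosTransform_sub (hf : Integrable f μ) (x y : E) :
    cosTransform μ f (x + y) + cosTransform μ f (x - y) =
      2 * cosTransform μ (fun v ↦ f v * cos ⟪v, y⟫) x := by
  simp only [cosTransform]
  rw [← integral_add (integrable_mul_cos_inner hf _) (integrable_mul_cos_inner hf _),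
    ← integral_const_mul]
  congr with v
  rw [inner_add_right, inner_sub_right, cos_add, cos_sub]
  ring

lemma integrable_mul_exp_inner (hf : Integrable f μ) (x : E) :
    Integrable (fun v ↦ (f v : ℂ) * Complex.exp (⟪v, x⟫ * Complex.I)) μ :=
  hf.ofReal.mul_bdd (c := 1) (Continuous.aestronglyMeasurable (by fun_prop))
    (.of_forall fun _ ↦ (Complex.norm_exp_ofReal_mul_I _).le)

lemma integral_mul_exp_inner_of_even [μ.IsNegInvariant] (heven : f.Even) (hf : Integrable f μ)
    (x : E) :
    ∫ v, (f v : ℂ) * Complex.exp (⟪v, x⟫ * Complex.I) ∂μ = cosTransform μ f x := by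
  have hsin : ∫ v, f v * sin ⟪v, x⟫ ∂μ = 0 :=
    integral_eq_zero_of_odd fun v ↦ by simp only [heven.eq, inner_neg_left, sin_neg, mul_neg]
  calc ∫ v, (f v : ℂ) * Complex.exp (⟪v, x⟫ * Complex.I) ∂μ
      = ∫ v, (((f v * cos ⟪v, x⟫ : ℝ) : ℂ) + ((f v * sin ⟪v, x⟫ : ℝ) : ℂ) * Complex.I) ∂μ := by
        congr with v
        rw [Complex.exp_mul_I]
        push_cast
        ring
    _ = cosTransform μ f x := by
        rw [integral_add (integrable_mul_cos_inner hf x).ofReal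
          ((integrable_mul_sin_inner hf x).ofReal.mul_const _), integral_mul_const,
          integral_complex_ofReal, integral_complex_ofReal, hsin, cosTransform]
        simp only [Complex.ofReal_zero, zero_mul, add_zero]

lemma two_mul_integral_mul_exp_mul_cos_sub_one_of_even [μ.IsNegInvariant] (heven : f.Even)
    (hf : Integrable f μ) (x y : E) :
    2 * ∫ v, (f v : ℂ) * (Complex.exp (⟪v, x⟫ * Complex.I) * (cos ⟪v, y⟫ : ℝ) - 1) ∂μ =
      (cosTransform μ f (x + y) + cosTransform μ f (x - y) - 2 * cosTransform μ f 0 : ℝ) := by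
  set g : E → ℝ := fun v ↦ f v * cos ⟪v, y⟫
  have hg : Integrable g μ := integrable_mul_cos_inner hf y
  have hfC : Integrable (fun v ↦ (f v : ℂ)) μ := hf.ofReal
  have hg_even : g.Even := fun v ↦ by simp only [g, heven.eq, inner_neg_left, cos_neg]
  calc 2 * ∫ v, (f v : ℂ) * (Complex.exp (⟪v, x⟫ * Complex.I) * (cos ⟪v, y⟫ : ℝ) - 1) ∂μ
      = 2 * ∫ v, ((g v : ℂ) * Complex.exp (⟪v, x⟫ * Complex.I) - (f v : ℂ)) ∂μ := by
        congr with v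
        simp only [g]
        push_cast
        ring
    _ = 2 * (cosTransform μ g x - cosTransform μ f 0 : ℝ) := by
        rw [integral_sub (integrable_mul_exp_inner hg x) hfC,
          integral_mul_exp_inner_of_even hg_even hg, integral_complex_ofReal, cosTransform_zero,
          Complex.ofReal_sub]
    _ = (cosTransform μ f (x + y) + cosTransform μ f (x - y) - 2 * cosTransform μ f 0 : ℝ) := by
        rw [cosTransform_add_add_cosTransform_sub hf]
        push_cast
        ring

end CosTransform

section Wigner

variable {d : ℕ} {Chat : EuclideanSpace ℝ (Fin d) → ℝ}

lemma corr_eq_cosTransform (x : EuclideanSpace ℝ (Fin d)) :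
    corr Chat x = ((2 * π) ^ d)⁻¹ * cosTransform volume Chat x := by
  rw [corr, rpow_neg (by positivity), rpow_natCast, cosTransform]

lemma continuous_corr (hint : Integrable Chat) : Continuous (corr Chat) := by
  simp only [funext corr_eq_cosTransform]
  exact (continuous_cosTransform hint).const_mul _

lemma Wfun_zero (β : ℝ) (r u : EuclideanSpace ℝ (Fin d)) : Wfun β r Chat 0 u = 1 := by
  simp [Wfun]

lemma hasDerivAt_Wfun (hint : Integrable Chat) (β : ℝ) (r u : EuclideanSpace ℝ (Fin d)) (ζ : ℝ) :
    HasDerivAt (fun t ↦ Wfun β r Chat t u)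
      (β * (corr Chat ((2 : ℝ)⁻¹ • u + ζ • r) + corr Chat ((2 : ℝ)⁻¹ • u - ζ • r)
        - 2 * corr Chat 0) * Wfun β r Chat ζ u) ζ := by
  have hcorr := continuous_corr hint
  have hcont : Continuous fun t : ℝ ↦ corr Chat ((2 : ℝ)⁻¹ • u + t • r)
      + corr Chat ((2 : ℝ)⁻¹ • u - t • r) - 2 * corr Chat 0 := by
    fun_prop
  simpa only [Wfun, mul_comm] using
    ((hcont.integral_hasStrictDerivAt 0 ζ).hasDerivAt.const_mul β).exp

lemma corr_add_corr_sub_eq_integral (heven : Chat.Even) (hint : Integrable Chat)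
    (r u : EuclideanSpace ℝ (Fin d)) (ζ : ℝ) :
    ((corr Chat ((2 : ℝ)⁻¹ • u + ζ • r) + corr Chat ((2 : ℝ)⁻¹ • u - ζ • r)
        - 2 * corr Chat 0 : ℝ) : ℂ) =
      ((2 / (2 * π) ^ d : ℝ) : ℂ) * ∫ v : EuclideanSpace ℝ (Fin d),
        ((Chat v : ℝ) : ℂ) * (Complex.exp (Complex.I * ((⟪v, u⟫ : ℝ) : ℂ) / 2) *
          ((cos (⟪r, v⟫ * ζ) : ℝ) : ℂ) - 1) := by
  have hexp (v : EuclideanSpace ℝ (Fin d)) : Complex.exp (Complex.I * ((⟪v, u⟫ : ℝ) : ℂ) / 2) =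
      Complex.exp (⟪v, (2 : ℝ)⁻¹ • u⟫ * Complex.I) := by
    rw [inner_smul_right]
    push_cast
    ring_nf
  have hcos (v : EuclideanSpace ℝ (Fin d)) : cos (⟪r, v⟫ * ζ) = cos ⟪v, ζ • r⟫ := by
    rw [inner_smul_right, real_inner_comm, mul_comm]
  have hkey :=
    two_mul_integral_mul_exp_mul_cos_sub_one_of_even heven hint ((2 : ℝ)⁻¹ • u) (ζ • r)
  simp only [corr_eq_cosTransform, hexp, hcos]
  push_cast at hkey ⊢
  linear_combination (-((2 * π : ℂ) ^ d)⁻¹) * hkey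

theorem wigner_reflection_ode_general (heven : Chat.Even) (hint : Integrable Chat) (β : ℝ)
    (r u : EuclideanSpace ℝ (Fin d)) :
    Wfun β r Chat 0 u = 1 ∧
    ∀ ζ : ℝ,
      HasDerivAt (fun t ↦ (Wfun β r Chat t u : ℂ))
        (((2 * β / (2 * π) ^ d : ℝ) : ℂ) *
          (∫ v : EuclideanSpace ℝ (Fin d),
            ((Chat v : ℝ) : ℂ) *
              (Complex.exp (Complex.I * ((⟪v, u⟫ : ℝ) : ℂ) / 2) *
                  ((cos (⟪r, v⟫ * ζ) : ℝ) : ℂ) - 1)) *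
          ((Wfun β r Chat ζ u : ℝ) : ℂ)) ζ := by
  refine ⟨Wfun_zero β r u, fun ζ ↦ (hasDerivAt_Wfun hint β r u ζ).ofReal_comp.congr_deriv ?_⟩
  rw [Complex.ofReal_mul, Complex.ofReal_mul, corr_add_corr_sub_eq_integral heven hint]
  push_cast
  ring

end Wigner

/-- Lemma 4.1(2) in the Fourier domain.
For `Chat₀` nonnegative, even and integrable, the function `W` satisfies `W(0,u) = 1` and the
scalar linear ODE
`∂_ζ W(ζ,u) = (2β/(2π)^d) (∫ Chat₀(v)[e^{iv·u/2} cos(r·vζ) − 1] dv) W(ζ,u)` for every `ζ ≥ 0`. -/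
theorem wigner_reflection_ode (d : ℕ) (hd : 1 ≤ d) (β : ℝ) (hβ : 0 < β)
    (r : EuclideanSpace ℝ (Fin d))
    (Chat : EuclideanSpace ℝ (Fin d) → ℝ)
    (hpos : ∀ u, 0 ≤ Chat u) (heven : ∀ u, Chat (-u) = Chat u) (hint : Integrable Chat) :
    ∀ u : EuclideanSpace ℝ (Fin d),
      Wfun β r Chat 0 u = 1 ∧
      ∀ ζ : ℝ, 0 ≤ ζ →
        HasDerivAt (fun t => (Wfun β r Chat t u : ℂ))
          (((2 * β / (2 * π) ^ d : ℝ) : ℂ) *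
            (∫ v : EuclideanSpace ℝ (Fin d),
              ((Chat v : ℝ) : ℂ) *
                (Complex.exp (Complex.I * ((⟪v, u⟫ : ℝ) : ℂ) / 2) *
                    ((Real.cos (⟪r, v⟫ * ζ) : ℝ) : ℂ) - 1)) *
            ((Wfun β r Chat ζ u : ℝ) : ℂ)) ζ := by
  exact fun u ↦ (wigner_reflection_ode_general heven hint β r u).imp_right fun hderiv ζ _ ↦ hderiv ζ
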